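/- Let n ≥ 1 and K > 1. Define U : ℝⁿ×ℝⁿ → ℝ by U(x,y) = ((K−1)/2)(|y|² − |x|²) + 1/(2(K−1)) if |x|+|y| ≤ (K−1)^{−1}, and U(x,y) = K|y| + (K−1)(|x|+1) − K − K(|x|+1)·log[((K−1)/K)(|x|+|y|+1)] if |x|+|y| > (K−1)^{−1}. Then for all x, y ∈ ℝⁿ satisfying |y| = (|x|+1)/(K−1), one has the equality U(x,y) = |y| − K·Ψ(|x|). -/

import Mathlib

/-! Put `t = ‖x‖`. If `‖y‖ = (t + 1) / (K - 1)`, then `(K - 1) / K * (t + ‖y‖ + 1) = t + 1`, so the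
logarithm in the outer branch of `Ulog` is the one in `PsiY`, and what remains is linear in `‖y‖`
and `t`. The inner branch `t + ‖y‖ ≤ (K - 1)⁻¹` meets this set only at `t = 0`, where both sides
equal `(K - 1)⁻¹`. -/

open Real

/-- The Young function `Ψ(t) = (t+1)log(t+1) − t`. -/
noncomputable def PsiY (t : ℝ) : ℝ := (t + 1) * Real.log (t + 1) - t

/-- The special function for the sharp logarithmic estimate. -/
noncomputable def Ulog (K : ℝ) {n : ℕ} (x y : EuclideanSpace ℝ (Fin n)) : ℝ :=
  if ‖x‖ + ‖y‖ ≤ (K - 1)⁻¹ then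
    ((K - 1) / 2) * (‖y‖ ^ 2 - ‖x‖ ^ 2) + 1 / (2 * (K - 1))
  else
    K * ‖y‖ + (K - 1) * (‖x‖ + 1) - K -
      K * (‖x‖ + 1) * Real.log ((K - 1) / K * (‖x‖ + ‖y‖ + 1))

/-- On the set `{(x,y) : |y| = (|x|+1)/(K−1)}` the majorization becomes the equality
`U(x,y) = |y| − K Ψ(|x|)`. -/
theorem stmt_11 (n : ℕ) (hn : 1 ≤ n) (K : ℝ) (hK : 1 < K)
    (x y : EuclideanSpace ℝ (Fin n)) (hxy : ‖y‖ = (‖x‖ + 1) / (K - 1)) :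
    Ulog K x y = ‖y‖ - K * PsiY ‖x‖ := by
  have hK1 : 0 < K - 1 := by linarith
  have hK0 : K ≠ 0 := by linarith
  have hx := norm_nonneg x
  unfold Ulog PsiY
  rw [hxy]
  generalize ‖x‖ = t at hx ⊢
  split_ifs with h
  · -- `t + (t + 1) / (K - 1) ≤ 1 / (K - 1)` with `t ≥ 0` leaves only `t = 0`.
    have h1 : t + t / (K - 1) ≤ 0 := by
      rw [add_div, one_div] at h
      linarith
    have h2 : 0 ≤ t / (K - 1) := by positivity
    obtain rfl : t = 0 := by linarith
    simp only [zero_add, Real.log_one]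
    field_simp
    ring
  · -- On this set the argument of the logarithm is exactly `t + 1`.
    have harg : (K - 1) / K * (t + (t + 1) / (K - 1) + 1) = t + 1 := by
      field_simp
      ring
    rw [harg]
    field_simp
    ring
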